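/- Let R be a weakly 2-primal ring, i.e., the set Nil(R) of nilpotent elements of R is a two-sided ideal and the non-unital subring generated by any finite subset of Nil(R) is nilpotent. If R is strongly unit nil-clean and G is a locally finite group (every finitely generated subgroup of G is finite), then the group ring RG is strongly unit nil-clean. -/

import Mathlib

/-!
An element `z` is strongly nil-clean as soon as `z - z ^ 2` is nilpotent, so it is enough to find, for
each `x` in `R[G]`, a unit `u` with `u * x` idempotent up to a nilpotent error. Units, idempotents and
nilpotents are preserved by the inclusion `R[H] → R[G]`, and `x` lives over the finite subgroup `H`
generated by its support, so `G` may be taken finite.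

Let `N` be the ideal of nilpotents of `R`. Elements of `R[G]` with coefficients in `N` are nilpotent,
by local nilpotence applied to the finitely many coefficients. The property therefore lifts from
`(R/N)[G]` to `R[G]` (`UnitNilIdempotent.of_map`).

The ring `R/N` is strongly regular: every element is an idempotent up to a unit, and idempotents are
central. The claim over `R/N` is reduced to division rings as one would pass to the Pierce stalks, but
with Zorn's lemma in place of compactness (`unitNilIdempotent_reduceCoeff`). If the claim fails modulo
`N`, there is an ideal `I` containing `N` maximal with this property, since a witness modulo the union
of a chain involves finitely many coefficients only. A
nontrivial idempotent of `R/I` arising from `R` would be central and allow gluing witnesses from two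
larger ideals (`UnitNilIdempotent.of_colonIdeal`). So `R/I` is zero or a division ring.

For a division ring `D` and finite `G`, the ring `D[G]` is Artinian on both sides. Some power `x ^ k`
then lies in `A * x ^ (2 * k)` and in `x ^ (2 * k) * A`, where `A = D[G]`. Fitting's argument yields an
idempotent `e` commuting with `x` such that `x` is invertible in `e * A * e` and nilpotent on the
complement. The inverse in the corner plus `1 - e` is the required unit (`UnitNilIdempotent.of_pow`).
-/


/-- An element `x` of a ring is *strongly nil-clean* if `x = e + b` where `e` is an
idempotent, `b` is nilpotent, and `e` and `b` commute. -/
def IsStronglyNilClean {R : Type*} [Ring R] (x : R) : Prop :=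
  ∃ e b : R, IsIdempotentElem e ∧ IsNilpotent b ∧ e * b = b * e ∧ x = e + b

/-- A ring `R` is *strongly unit nil-clean* if for every `x : R` there is a unit `u`
such that `u * x` is strongly nil-clean. -/
def StronglyUnitNilClean (R : Type*) [Ring R] : Prop :=
  ∀ x : R, ∃ u : Rˣ, IsStronglyNilClean ((u : R) * x)

/-- A ring `R` is *unit-regular* if every `a : R` satisfies `a = a * u * a` for some unit `u`. -/
def UnitRegular (R : Type*) [Ring R] : Prop :=
  ∀ a : R, ∃ u : Rˣ, a = a * (u : R) * a

/-- A group is *locally finite* if every finitely generated subgroup is finite. -/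
def LocallyFiniteGroup (G : Type*) [Group G] : Prop :=
  ∀ H : Subgroup G, H.FG → (H : Set G).Finite

/-- A subset `T` of a ring is *nilpotent* if there is `n ≥ 1` such that every product of
`n` elements of `T` is zero. -/
def IsNilpotentSubset {R : Type*} [Ring R] (T : Set R) : Prop :=
  ∃ n : ℕ, 0 < n ∧ ∀ l : List R, (∀ a ∈ l, a ∈ T) → l.length = n → l.prod = 0

/-- A subset `S` of a ring is *locally nilpotent* if the non-unital subring generated by
any finite subset of `S` is nilpotent. -/
def IsLocallyNilpotentSet {R : Type*} [Ring R] (S : Set R) : Prop :=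
  ∀ F : Finset R, (F : Set R) ⊆ S →
    IsNilpotentSubset ((NonUnitalSubring.closure (F : Set R) : Set R))

/-- A ring is *NI* if the set of nilpotent elements forms a two-sided ideal. -/
def IsNIRing (R : Type*) [Ring R] : Prop :=
  ∃ I : TwoSidedIdeal R, ∀ x : R, x ∈ I ↔ IsNilpotent x

/-- A ring is *weakly 2-primal* if its set of nilpotent elements is a two-sided ideal
which is moreover locally nilpotent. -/
def Weakly2Primal (R : Type*) [Ring R] : Prop :=
  IsNIRing R ∧ IsLocallyNilpotentSet {x : R | IsNilpotent x}

/-! ### Elements with an idempotent unit multiple modulo nilpotents -/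

/-- `x` becomes idempotent up to a nilpotent error after multiplication by some unit. -/
def UnitNilIdempotent {A : Type*} [Ring A] (x : A) : Prop :=
  ∃ u : Aˣ, IsNilpotent ((u : A) * x - ((u : A) * x) ^ 2)

open Polynomial in
/-- The sufficient half of the criterion that `z` is strongly nil-clean iff `z - z ^ 2` is nilpotent:
the idempotent is a polynomial in `z`. -/
lemma isStronglyNilClean_of_isNilpotent_sub_sq {A : Type*} [Ring A] {z : A}
    (h : IsNilpotent (z - z ^ 2)) : IsStronglyNilClean z := by
  obtain ⟨n, hn⟩ := h
  have hn1 : (z - z ^ 2) ^ (n + 1) = 0 := by rw [pow_succ, hn, zero_mul]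
  set e : A := 1 - (1 - z ^ (n + 1)) ^ (n + 1) with he
  have hze : Commute z e :=
    (Commute.one_right z).sub_right
      (((Commute.one_right z).sub_right (Commute.pow_right (Commute.refl z) _)).pow_right _)
  refine ⟨e, z - e, isIdempotentElem_one_sub_one_sub_pow_pow z _ hn1, ?_, ?_, by abel⟩
  · -- the polynomial expressing `z - e` vanishes at `0` and `1`, so `X - X ^ 2` divides it
    let p : ℤ[X] := X - (1 - (1 - X ^ (n + 1)) ^ (n + 1))
    have h0 : X - C 0 ∣ p := dvd_iff_isRoot.2 (by simp [p])
    have h1 : X - C 1 ∣ p := dvd_iff_isRoot.2 (by simp [p])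
    have hco : IsCoprime (X - C 0 : ℤ[X]) (X - C 1) := ⟨1, -1, by simp⟩
    obtain ⟨q, hq⟩ := hco.mul_dvd h0 h1
    have hp : z - e = aeval z p := by simp [p, he]
    have hq' : z - e = -(z - z ^ 2) * aeval z q := by
      rw [hp, hq]; simp [mul_sub, sub_mul, pow_two]
    have hc : Commute (-(z - z ^ 2)) (aeval z q) := by
      have : -(z - z ^ 2) = aeval z (-(X - X ^ 2 : ℤ[X])) := by simp
      rw [this, commute_iff_eq, ← map_mul, ← map_mul, mul_comm]
    rw [hq']
    exact hc.isNilpotent_mul_right (IsNilpotent.neg ⟨n, hn⟩)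
  · exact (hze.symm.sub_right (Commute.refl e)).eq

lemma UnitNilIdempotent.exists_unit {A : Type*} [Ring A] {x : A} (h : UnitNilIdempotent x) :
    ∃ u : Aˣ, IsStronglyNilClean ((u : A) * x) :=
  h.imp fun _ hu => isStronglyNilClean_of_isNilpotent_sub_sq hu

lemma UnitNilIdempotent.map {A B : Type*} [Ring A] [Ring B] (f : A →+* B) {x : A}
    (h : UnitNilIdempotent x) : UnitNilIdempotent (f x) := by
  obtain ⟨u, hu⟩ := h
  refine ⟨Units.map f u, ?_⟩
  simpa using hu.map f

/-- The property of an image, spelled out on preimages of the unit and of its inverse. -/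
lemma unitNilIdempotent_map_iff {A B : Type*} [Ring A] [Ring B] {f : A →+* B}
    (hf : Function.Surjective f) {x : A} :
    UnitNilIdempotent (f x) ↔ ∃ u v : A, ∃ k : ℕ,
      f (u * v - 1) = 0 ∧ f (v * u - 1) = 0 ∧ f ((u * x - (u * x) ^ 2) ^ k) = 0 := by
  constructor
  · rintro ⟨u, k, hk⟩
    obtain ⟨a, ha⟩ := hf u
    obtain ⟨b, hb⟩ := hf ↑u⁻¹
    exact ⟨a, b, k, by simp [ha, hb], by simp [ha, hb], by simpa [ha] using hk⟩
  · rintro ⟨a, b, k, h1, h2, h3⟩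
    refine ⟨⟨f a, f b, ?_, ?_⟩, k, ?_⟩
    · simpa [sub_eq_zero] using h1
    · simpa [sub_eq_zero] using h2
    · simpa using h3

/-- The property lifts along a surjection with nil kernel, since units do. -/
lemma UnitNilIdempotent.of_map {A B : Type*} [Ring A] [Ring B] {f : A →+* B}
    (hf : Function.Surjective f) (hker : ∀ z, f z = 0 → IsNilpotent z) {x : A}
    (h : UnitNilIdempotent (f x)) : UnitNilIdempotent x := by
  obtain ⟨u, v, k, h1, h2, h3⟩ := (unitNilIdempotent_map_iff hf).1 h
  have h1' : IsUnit (u * v) := by simpa using (hker _ h1).isUnit_add_one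
  have h2' : IsUnit (v * u) := by simpa using (hker _ h2).isUnit_add_one
  have hu : IsUnit u := by
    obtain ⟨c, hc⟩ := h1'
    obtain ⟨d, hd⟩ := h2'
    have hr : u * (v * ↑c⁻¹) = 1 := by rw [← mul_assoc, ← hc, Units.mul_inv]
    have hl : (↑d⁻¹ * v) * u = 1 := by rw [mul_assoc, ← hd, Units.inv_mul]
    exact ⟨⟨u, v * ↑c⁻¹, hr, by rw [← left_inv_eq_right_inv hl hr, hl]⟩, rfl⟩
  obtain ⟨u, rfl⟩ := hu
  obtain ⟨m, hm⟩ := hker _ h3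
  exact ⟨u, k * m, by rw [pow_mul, hm]⟩

/-- Gluing along a central idempotent `f`: witnesses on the factors `f * A` and `(1 - f) * A` of `A`
combine to one on `A`. The two nilpotency exponents may differ. -/
lemma UnitNilIdempotent.glue {A : Type*} [Ring A] {f x : A} (hf : f * f = f)
    (hc : ∀ r, f * r = r * f) {u₁ v₁ u₂ v₂ : A} {k₁ k₂ : ℕ}
    (h1 : f * (u₁ * v₁ - 1) = 0) (h1' : f * (v₁ * u₁ - 1) = 0)
    (h1k : f * (u₁ * x - (u₁ * x) ^ 2) ^ k₁ = 0)
    (h2 : (1 - f) * (u₂ * v₂ - 1) = 0) (h2' : (1 - f) * (v₂ * u₂ - 1) = 0)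
    (h2k : (1 - f) * (u₂ * x - (u₂ * x) ^ 2) ^ k₂ = 0) : UnitNilIdempotent x := by
  have hf' : f * (1 - f) = 0 := by rw [mul_sub, hf, mul_one, sub_self]
  have hfg : (1 - f) * f = 0 := by rw [sub_mul, hf, one_mul, sub_self]
  have hff : (1 - f) * (1 - f) = 1 - f := by rw [mul_sub, hfg, mul_one, sub_zero]
  have hc' : ∀ r, (1 - f) * r = r * (1 - f) := fun r => by
    rw [sub_mul, mul_sub, hc, one_mul, mul_one]
  -- congruence modulo the annihilator of a central idempotent
  have mulc : ∀ p : A, (∀ r, p * r = r * p) → ∀ a a' b b' : A, p * a = p * a' → p * b = p * b' →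
      p * (a * b) = p * (a' * b') := fun p hp a a' b b' ha hb => by
    rw [← mul_assoc, ha, mul_assoc, ← mul_assoc, hp, mul_assoc, hb, ← mul_assoc, ← hp, mul_assoc]
  have powc : ∀ p : A, (∀ r, p * r = r * p) → ∀ a a' : A, p * a = p * a' → ∀ k : ℕ,
      p * a ^ k = p * a' ^ k := fun p hp a a' ha k => by
    induction k with
    | zero => simp
    | succ k ih => rw [pow_succ, pow_succ]; exact mulc p hp _ _ _ _ ih ha
  have split : ∀ a : A, f * a = 0 → (1 - f) * a = 0 → a = 0 := fun a ha hb => by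
    have : a = f * a + (1 - f) * a := by noncomm_ring
    rw [this, ha, hb, add_zero]
  have left : ∀ a b : A, f * (f * a + (1 - f) * b) = f * a := fun a b => by
    rw [mul_add, ← mul_assoc, ← mul_assoc, hf, hf', zero_mul, add_zero]
  have right : ∀ a b : A, (1 - f) * (f * a + (1 - f) * b) = (1 - f) * b := fun a b => by
    rw [mul_add, ← mul_assoc, ← mul_assoc, hfg, hff, zero_mul, zero_add]
  have inv : ∀ a b c d : A, f * (a * c - 1) = 0 → (1 - f) * (b * d - 1) = 0 →
      (f * a + (1 - f) * b) * (f * c + (1 - f) * d) = 1 := fun a b c d h h' => by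
    refine sub_eq_zero.1 (split _ ?_ ?_)
    · rw [mul_sub, mulc f hc _ _ _ _ (left a b) (left c d), ← mul_sub, h]
    · rw [mul_sub, mulc (1 - f) hc' _ _ _ _ (right a b) (right c d), ← mul_sub, h']
  have sq : ∀ p : A, (∀ r, p * r = r * p) → ∀ u u' : A, p * u = p * u' → ∀ k : ℕ,
      p * (u' * x - (u' * x) ^ 2) ^ k = 0 → ∀ m, p * (u * x - (u * x) ^ 2) ^ (k + m) = 0 :=
    fun p hp u u' hu k hk m => by
      have hux := mulc p hp _ _ x x hu rfl
      rw [pow_add, ← mul_assoc, powc p hp _ (u' * x - (u' * x) ^ 2) _ k, hk, zero_mul]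
      rw [mul_sub, mul_sub, hux, powc p hp _ _ hux]
  refine ⟨⟨_, _, inv u₁ u₂ v₁ v₂ h1 h2, inv v₁ v₂ u₁ u₂ h1' h2'⟩, k₁ + k₂, split _ ?_ ?_⟩
  · exact sq f hc _ _ (left _ _) _ h1k _
  · have := sq (1 - f) hc' _ _ (right u₁ u₂) _ h2k k₁
    rw [add_comm k₂ k₁] at this
    exact this

/-! ### Artinian group rings -/

/-- Fitting's argument. If `a = x ^ k` satisfies `a = p * a ^ 2 = a ^ 2 * q`, then `e = p * a` is an
idempotent commuting with `x`, on whose corner `x` is invertible and on whose complement `x` is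
nilpotent. -/
lemma UnitNilIdempotent.of_pow {A : Type*} [Ring A] {x p q : A} {k : ℕ}
    (hp : x ^ (k + 1) = p * (x ^ (k + 1)) ^ 2) (hq : x ^ (k + 1) = (x ^ (k + 1)) ^ 2 * q) :
    UnitNilIdempotent x := by
  obtain ⟨a, ha⟩ : ∃ a, a = x ^ (k + 1) := ⟨_, rfl⟩
  have hxa : x * a = a * x := by rw [ha, ← pow_succ, ← pow_succ']
  have hax : a = x * x ^ k := by rw [ha, pow_succ']
  have hax' : a = x ^ k * x := by rw [ha, pow_succ]
  rw [← ha, pow_two] at hp hq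
  obtain ⟨e, he⟩ : ∃ e, e = p * a := ⟨_, rfl⟩
  have he' : e = a * q := by
    rw [he]; nth_rewrite 1 [hq]; rw [← mul_assoc, ← hp]
  have hea : e * a = a := by rw [he, mul_assoc, ← hp]
  have hae : a * e = a := by rw [he', ← mul_assoc, ← hq]
  have hee : e * e = e := by nth_rewrite 2 [he']; rw [← mul_assoc, hea, he']
  have hexe : e * x * e = x * e := by
    rw [he', mul_assoc, ← mul_assoc x, hxa, ← mul_assoc, ← mul_assoc, ← he', hea]
  have hexe' : e * x * e = e * x := by
    calc e * x * e = p * (a * x) * e := by rw [he, mul_assoc p a x]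
      _ = p * x * (a * e) := by rw [← hxa]; simp only [mul_assoc]
      _ = e * x := by rw [hae, he, mul_assoc, hxa, mul_assoc]
  have hex : e * x = x * e := hexe'.symm.trans hexe
  -- `b` is the inverse of `a` in the corner of `e`
  obtain ⟨b, hb⟩ : ∃ b, b = p * a * q := ⟨_, rfl⟩
  have hbq : b = e * q := by rw [hb, he]
  have hbp : b = p * e := by rw [hb, he', mul_assoc]
  have hab : a * b = e := by rw [hbq, ← mul_assoc, hae, he']
  have hba : b * a = e := by rw [hbp, mul_assoc, hea, he]
  have heb : e * b = b := by rw [hbq, ← mul_assoc, hee]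
  have hbe : b * e = b := by rw [hbp, mul_assoc, hee]
  have hbx : b * x = x * b := by
    calc b * x = b * (e * x) := by rw [← mul_assoc, hbe]
      _ = b * (x * a) * b := by rw [hex, ← hab]; simp only [mul_assoc]
      _ = (b * a) * x * b := by rw [hxa]; simp only [mul_assoc]
      _ = x * (e * b) := by rw [hba, hex, mul_assoc]
      _ = x * b := by rw [heb]
  -- `w` is the inverse of `x` in the corner of `e`
  obtain ⟨w, hw⟩ : ∃ w, w = x ^ k * b := ⟨_, rfl⟩
  have hxw : x * w = e := by rw [hw, ← mul_assoc, ← hax, hab]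
  have hwx : w * x = e := by rw [hw, mul_assoc, hbx, ← mul_assoc, ← hax', hab]
  have hwe : w * e = w := by rw [hw, mul_assoc, hbe]
  have hew : e * w = w := by
    rw [hw, ← mul_assoc, (Commute.pow_right (show Commute e x from hex) k).eq, mul_assoc, heb]
  have hnil : IsNilpotent ((1 - e) * x) := by
    have hcomm : Commute (1 - e) x := (Commute.one_left x).sub_left hex
    refine ⟨k + 1, ?_⟩
    rw [hcomm.mul_pow, ← ha, IsIdempotentElem.pow_succ_eq k (IsIdempotentElem.one_sub hee),
      sub_mul, hea, one_mul, sub_self]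
  have huv : (w + (1 - e)) * (x * e + (1 - e)) = 1 := by
    have h1 : w * (x * e) = e := by rw [← mul_assoc, hwx, hee]
    have h2 : e * (x * e) = x * e := by rw [← mul_assoc, hexe]
    simp only [add_mul, mul_add, sub_mul, mul_sub, h1, h2, hwe, hee, mul_one, one_mul]
    abel
  have hvu : (x * e + (1 - e)) * (w + (1 - e)) = 1 := by
    have h1 : x * e * w = e := by rw [mul_assoc, hew, hxw]
    have h2 : x * e * e = x * e := by rw [mul_assoc, hee]
    simp only [add_mul, mul_add, sub_mul, mul_sub, h1, h2, hew, hee, mul_one, one_mul]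
    abel
  refine ⟨⟨_, _, huv, hvu⟩, ?_⟩
  have hux : (w + (1 - e)) * x - ((w + (1 - e)) * x) ^ 2 = (1 - e) * x * (1 - x) := by
    have h2 : e * (e * x) = e * x := by rw [← mul_assoc, hee]
    have h3 : x * (e * x) = e * (x * x) := by rw [← mul_assoc, ← hex, mul_assoc]
    have h4 : e * (e * (x * x)) = e * (x * x) := by rw [← mul_assoc, hee]
    rw [pow_two, add_mul, hwx]
    simp only [add_mul, mul_add, sub_mul, mul_sub, h2, h3, h4, hee, ← hex, mul_one, one_mul,
      mul_assoc]
    abel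
  change IsNilpotent ((w + (1 - e)) * x - ((w + (1 - e)) * x) ^ 2)
  rw [hux]
  refine Commute.isNilpotent_mul_right ?_ hnil
  refine (Commute.one_right _).sub_right (Commute.mul_left ?_ (Commute.refl x))
  exact (Commute.one_left x).sub_left hex

/-- In a left Artinian ring the left ideals generated by the powers of `x` stabilise. -/
lemma exists_pow_eq_mul_pow {A : Type*} [Ring A] [IsArtinianRing A] (x : A) :
    ∃ n, ∀ m, n ≤ m → ∃ y, x ^ m = y * x ^ (m + 1) := by
  obtain ⟨n, hn⟩ := IsArtinian.monotone_stabilizes (R := A) (M := A)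
    ⟨fun k => OrderDual.toDual (Ideal.span {x ^ k}), fun i j hij => by
      change Ideal.span {x ^ j} ≤ Ideal.span {x ^ i}
      rw [Ideal.span_singleton_le_iff_mem, Ideal.mem_span_singleton']
      exact ⟨x ^ (j - i), by rw [← pow_add, Nat.sub_add_cancel hij]⟩⟩
  refine ⟨n, fun m hm => ?_⟩
  have h1 : Ideal.span {x ^ m} = Ideal.span {x ^ (m + 1)} :=
    (hn m hm).symm.trans (hn (m + 1) (by omega))
  have : x ^ m ∈ Ideal.span {x ^ (m + 1)} := h1 ▸ Ideal.mem_span_singleton_self _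
  obtain ⟨y, hy⟩ := Ideal.mem_span_singleton'.1 this
  exact ⟨y, hy.symm⟩

lemma exists_pow_eq_mul_pow_add {A : Type*} [Ring A] {x : A} {n : ℕ}
    (h : ∀ m, n ≤ m → ∃ y, x ^ m = y * x ^ (m + 1)) {m : ℕ} (hm : n ≤ m) (j : ℕ) :
    ∃ y, x ^ m = y * x ^ (m + j) := by
  induction j with
  | zero => exact ⟨1, by simp⟩
  | succ j ih =>
    obtain ⟨y, hy⟩ := ih
    obtain ⟨z, hz⟩ := h (m + j) (by omega)
    exact ⟨y * z, by rw [hy, hz, mul_assoc, add_assoc]⟩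

lemma UnitNilIdempotent.of_isArtinianRing {A : Type*} [Ring A] [IsArtinianRing A]
    [IsArtinianRing Aᵐᵒᵖ] (x : A) : UnitNilIdempotent x := by
  obtain ⟨n, hn⟩ := exists_pow_eq_mul_pow x
  obtain ⟨n', hn'⟩ := exists_pow_eq_mul_pow (MulOpposite.op x)
  obtain ⟨p, hp⟩ := exists_pow_eq_mul_pow_add hn (m := n + n' + 1) (by omega) (n + n' + 1)
  obtain ⟨q, hq⟩ := exists_pow_eq_mul_pow_add hn' (m := n + n' + 1) (by omega) (n + n' + 1)
  refine .of_pow (k := n + n') (p := p) (q := q.unop) ?_ ?_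
  · rw [← pow_mul, mul_two, ← hp]
  · rw [← pow_mul, mul_two]
    simpa using congrArg MulOpposite.unop hq

/-- `D[G]` is finite-dimensional over `D` on the left, and its opposite `Dᵐᵒᵖ[Gᵐᵒᵖ]` over `Dᵐᵒᵖ`, so it
is Artinian on both sides. -/
lemma UnitNilIdempotent.of_divisionRing {D G : Type*} [DivisionRing D] [Group G] [Finite G]
    (x : MonoidAlgebra D G) : UnitNilIdempotent x := by
  have : Finite Gᵐᵒᵖ := .of_equiv G MulOpposite.opEquiv
  have : Module.Finite D (MonoidAlgebra D G) := .of_basis (MonoidAlgebra.basis G D)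
  have : Module.Finite Dᵐᵒᵖ (MonoidAlgebra Dᵐᵒᵖ Gᵐᵒᵖ) :=
    .of_basis (MonoidAlgebra.basis Gᵐᵒᵖ Dᵐᵒᵖ)
  have : IsArtinianRing (MonoidAlgebra D G) := .of_finite D _
  have : IsArtinianRing (MonoidAlgebra Dᵐᵒᵖ Gᵐᵒᵖ) := .of_finite Dᵐᵒᵖ _
  have : IsArtinianRing (MonoidAlgebra D G)ᵐᵒᵖ :=
    Function.Surjective.isArtinianRing
      (f := (MonoidAlgebra.opRingEquiv (R := D) (M := G)).symm) (RingEquiv.surjective _)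
  exact .of_isArtinianRing x

/-! ### Group ring elements with nilpotent coefficients -/

/-- The products of `m` elements of a set containing the coefficients of `z` additively generate a
subgroup containing every coefficient of `z ^ m`. -/
lemma coeff_pow_mem_closure {R G : Type*} [Ring R] [Group G] (z : MonoidAlgebra R G) {T : Set R}
    (hT : ∀ g, g ∈ z.coeff.support → z.coeff g ∈ T) (m : ℕ) (g : G) :
    (z ^ m).coeff g ∈
      AddSubgroup.closure {r | ∃ l : List R, (∀ a ∈ l, a ∈ T) ∧ l.length = m ∧ l.prod = r} := by
  classical
  induction m generalizing g with
  | zero =>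
    rw [pow_zero, MonoidAlgebra.one_def, MonoidAlgebra.coeff_single, Finsupp.single_apply]
    split_ifs
    · exact AddSubgroup.subset_closure ⟨[], by simp⟩
    · exact zero_mem _
  | succ m ih =>
    rw [pow_succ, MonoidAlgebra.coeff_mul_apply_right, Finsupp.sum]
    refine sum_mem fun h hh => ?_
    refine AddSubgroup.closure_induction (p := fun r _ => r * z.coeff h ∈ AddSubgroup.closure
      {r | ∃ l : List R, (∀ a ∈ l, a ∈ T) ∧ l.length = m + 1 ∧ l.prod = r})
      ?_ ?_ ?_ ?_ (ih (g * h⁻¹))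
    · rintro _ ⟨l, hl, hlen, rfl⟩
      refine AddSubgroup.subset_closure ⟨l ++ [z.coeff h], ?_, by simp [hlen], by simp⟩
      intro a ha
      rcases List.mem_append.1 ha with ha | ha
      · exact hl a ha
      · rw [List.mem_singleton.1 ha]; exact hT h hh
    · simp
    · intro a b _ _ ha hb
      rw [add_mul]; exact add_mem ha hb
    · intro a _ ha
      rw [neg_mul]; exact neg_mem ha

lemma MonoidAlgebra.isNilpotent_of_isNilpotent_coeff {R G : Type*} [Ring R] [Group G]
    (h : IsLocallyNilpotentSet {x : R | IsNilpotent x}) (z : MonoidAlgebra R G)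
    (hz : ∀ g, IsNilpotent (z.coeff g)) : IsNilpotent z := by
  classical
  obtain ⟨n, -, hn⟩ := h (z.coeff.support.image z.coeff) (by
    intro r hr
    obtain ⟨g, -, rfl⟩ := Finset.mem_image.1 hr
    exact hz g)
  refine ⟨n, ?_⟩
  ext g
  have hmem := coeff_pow_mem_closure z (T := (NonUnitalSubring.closure
      ((z.coeff.support.image z.coeff : Finset R) : Set R) : Set R)) (fun g hg =>
    NonUnitalSubring.subset_closure (Finset.mem_coe.2 (Finset.mem_image_of_mem z.coeff hg))) n g
  have h0 : {r : R | ∃ l : List R, (∀ a ∈ l, a ∈ (NonUnitalSubring.closure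
      ((z.coeff.support.image z.coeff : Finset R) : Set R) : Set R)) ∧
      l.length = n ∧ l.prod = r} ⊆ {0} := by
    rintro _ ⟨l, hl, hlen, rfl⟩
    exact hn l hl hlen
  have := AddSubgroup.closure_mono h0 hmem
  simpa [AddSubgroup.closure_singleton_zero] using this

/-! ### Reduction of coefficients modulo two-sided ideals -/

/-- Reduction of the coefficients of `R[G]` modulo a two-sided ideal. -/
noncomputable abbrev reduceCoeff {R : Type*} [Ring R] (G : Type*) [Group G]
    (I : TwoSidedIdeal R) : MonoidAlgebra R G →+* MonoidAlgebra I.ringCon.Quotient G :=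
  MonoidAlgebra.mapRingHom G I.ringCon.mk'

lemma mk'_eq_zero_iff {R : Type*} [Ring R] (I : TwoSidedIdeal R) (r : R) :
    I.ringCon.mk' r = 0 ↔ r ∈ I := by
  rw [← TwoSidedIdeal.mem_ker, TwoSidedIdeal.ker_ringCon_mk']

lemma reduceCoeff_eq_zero_iff {R G : Type*} [Ring R] [Group G] {I : TwoSidedIdeal R}
    {z : MonoidAlgebra R G} : reduceCoeff G I z = 0 ↔ ∀ g, z.coeff g ∈ I := by
  rw [← MonoidAlgebra.coeff_eq_zero, Finsupp.ext_iff]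
  refine forall_congr' fun g => ?_
  rw [MonoidAlgebra.coeff_mapRingHom, Finsupp.zero_apply, mk'_eq_zero_iff]

lemma reduceCoeff_surjective {R G : Type*} [Ring R] [Group G] (I : TwoSidedIdeal R) :
    Function.Surjective (reduceCoeff G I) := by
  intro y
  induction y using MonoidAlgebra.induction_linear with
  | zero => exact ⟨0, map_zero _⟩
  | add a b ha hb =>
    obtain ⟨a, rfl⟩ := ha
    obtain ⟨b, rfl⟩ := hb
    exact ⟨a + b, map_add _ _ _⟩
  | single g r =>
    obtain ⟨r, rfl⟩ := RingCon.mk'_surjective I.ringCon r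
    exact ⟨MonoidAlgebra.single g r, MonoidAlgebra.mapRingHom_single _ _ _⟩

/-- The elements that `e` multiplies into `I`, where `e` is central modulo `I`. -/
def colonIdeal {R : Type*} [Ring R] (I : TwoSidedIdeal R) (e : R)
    (he : ∀ r, e * r - r * e ∈ I) : TwoSidedIdeal R :=
  .mk' {r | e * r ∈ I} (by simp [I.zero_mem])
    (fun {a b} ha hb => by
      rw [Set.mem_ofPred_eq, mul_add]; exact I.add_mem ha hb)
    (fun {a} ha => by
      rw [Set.mem_ofPred_eq, mul_neg]; exact I.neg_mem ha)
    (fun {a b} hb => by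
      have h : e * (a * b) = (e * a - a * e) * b + a * (e * b) := by noncomm_ring
      rw [Set.mem_ofPred_eq, h]
      exact I.add_mem (I.mul_mem_right _ _ (he a)) (I.mul_mem_left _ _ hb))
    (fun {a b} ha => by
      rw [Set.mem_ofPred_eq, ← mul_assoc]; exact I.mul_mem_right _ _ ha)

lemma mem_colonIdeal {R : Type*} [Ring R] {I : TwoSidedIdeal R} {e : R}
    {he : ∀ r, e * r - r * e ∈ I} {r : R} : r ∈ colonIdeal I e he ↔ e * r ∈ I :=
  TwoSidedIdeal.mem_mk' _ _ _ _ _ _ _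

lemma le_colonIdeal {R : Type*} [Ring R] {I : TwoSidedIdeal R} {e : R}
    {he : ∀ r, e * r - r * e ∈ I} : I ≤ colonIdeal I e he :=
  fun _ hr => mem_colonIdeal.2 (I.mul_mem_left _ _ hr)

lemma reduceCoeff_single_mul_eq_zero {R G : Type*} [Ring R] [Group G] {I : TwoSidedIdeal R} {e : R}
    {he : ∀ r, e * r - r * e ∈ I} {z : MonoidAlgebra R G}
    (hz : reduceCoeff G (colonIdeal I e he) z = 0) :
    reduceCoeff G I (MonoidAlgebra.single 1 e) * reduceCoeff G I z = 0 := by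
  rw [← map_mul, reduceCoeff_eq_zero_iff]
  intro g
  rw [MonoidAlgebra.coeff_single_one_mul]
  exact mem_colonIdeal.1 (reduceCoeff_eq_zero_iff.1 hz g)

/-- If `e` is an idempotent central modulo `I`, the claim modulo `I` follows from the claims modulo the
two larger ideals `(I : e)` and `(I : 1 - e)`, by gluing along the image of `e`. -/
lemma UnitNilIdempotent.of_colonIdeal {R G : Type*} [Ring R] [Group G] {I : TwoSidedIdeal R} {e : R}
    (hee : e * e = e) (he : ∀ r, e * r - r * e ∈ I) (he' : ∀ r, (1 - e) * r - r * (1 - e) ∈ I)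
    {x : MonoidAlgebra R G} (h1 : UnitNilIdempotent (reduceCoeff G (colonIdeal I e he) x))
    (h2 : UnitNilIdempotent (reduceCoeff G (colonIdeal I (1 - e) he') x)) :
    UnitNilIdempotent (reduceCoeff G I x) := by
  obtain ⟨u₁, v₁, k₁, a₁, b₁, c₁⟩ := (unitNilIdempotent_map_iff (reduceCoeff_surjective _)).1 h1
  obtain ⟨u₂, v₂, k₂, a₂, b₂, c₂⟩ := (unitNilIdempotent_map_iff (reduceCoeff_surjective _)).1 h2
  replace a₁ := reduceCoeff_single_mul_eq_zero a₁
  replace b₁ := reduceCoeff_single_mul_eq_zero b₁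
  replace c₁ := reduceCoeff_single_mul_eq_zero c₁
  replace a₂ := reduceCoeff_single_mul_eq_zero a₂
  replace b₂ := reduceCoeff_single_mul_eq_zero b₂
  replace c₂ := reduceCoeff_single_mul_eq_zero c₂
  have hs : reduceCoeff G I (MonoidAlgebra.single 1 (1 - e)) =
      1 - reduceCoeff G I (MonoidAlgebra.single 1 e) := by
    rw [← map_one (reduceCoeff G I), ← map_sub, MonoidAlgebra.one_def, MonoidAlgebra.single_sub]
  rw [hs] at a₂ b₂ c₂
  simp only [map_sub, map_mul, map_one, map_pow] at a₁ b₁ c₁ a₂ b₂ c₂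
  refine .glue (f := reduceCoeff G I (MonoidAlgebra.single 1 e)) ?_ ?_ a₁ b₁ c₁ a₂ b₂ c₂
  · rw [← map_mul, MonoidAlgebra.single_mul_single, hee, mul_one]
  · intro r
    obtain ⟨r, rfl⟩ := reduceCoeff_surjective I r
    rw [← sub_eq_zero, ← map_mul, ← map_mul, ← map_sub, reduceCoeff_eq_zero_iff]
    intro g
    rw [MonoidAlgebra.coeff_sub, Finsupp.sub_apply, MonoidAlgebra.coeff_single_one_mul,
      MonoidAlgebra.coeff_mul_single_one]
    exact he _

/-- The union of a nonempty chain of two-sided ideals. -/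
lemma exists_chain_union {R : Type*} [Ring R] {c : Set (TwoSidedIdeal R)}
    (hc : IsChain (· ≤ ·) c) (hne : c.Nonempty) :
    ∃ J : TwoSidedIdeal R, ∀ r, r ∈ J ↔ ∃ I ∈ c, r ∈ I := by
  obtain ⟨I₀, hI₀⟩ := hne
  refine ⟨.mk' {r | ∃ I ∈ c, r ∈ I} ⟨I₀, hI₀, I₀.zero_mem⟩ ?_ ?_ ?_ ?_, fun r =>
    TwoSidedIdeal.mem_mk' _ _ _ _ _ _ _⟩
  · rintro a b ⟨I, hI, ha⟩ ⟨J, hJ, hb⟩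
    rcases hc.total hI hJ with h | h
    · exact ⟨J, hJ, J.add_mem (h ha) hb⟩
    · exact ⟨I, hI, I.add_mem ha (h hb)⟩
  · rintro a ⟨I, hI, ha⟩
    exact ⟨I, hI, I.neg_mem ha⟩
  · rintro a b ⟨I, hI, ha⟩
    exact ⟨I, hI, I.mul_mem_left _ _ ha⟩
  · rintro a b ⟨I, hI, ha⟩
    exact ⟨I, hI, I.mul_mem_right _ _ ha⟩

/-- An element of `R[G]` has finitely many nonzero coefficients, so those vanish modulo one member of the
chain as soon as they vanish modulo its union. -/
lemma exists_reduceCoeff_eq_zero_of_chain {R G : Type*} [Ring R] [Group G]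
    {c : Set (TwoSidedIdeal R)} (hc : IsChain (· ≤ ·) c) (hne : c.Nonempty) {J : TwoSidedIdeal R}
    (hJ : ∀ r, r ∈ J ↔ ∃ I ∈ c, r ∈ I) {z : MonoidAlgebra R G} (hz : reduceCoeff G J z = 0) :
    ∃ I ∈ c, reduceCoeff G I z = 0 := by
  classical
  have hdir : DirectedOn (fun I J : TwoSidedIdeal R => (I : Set R) ⊆ J) c := hc.directedOn
  obtain ⟨I, hI, hsub⟩ := hdir.exists_mem_subset_of_finset_subset_biUnion hne
    (s := z.coeff.support.image z.coeff) (by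
      intro r hr
      obtain ⟨g, -, rfl⟩ := Finset.mem_image.1 hr
      obtain ⟨I, hI, h⟩ := (hJ _).1 (reduceCoeff_eq_zero_iff.1 hz g)
      exact Set.mem_biUnion hI h)
  refine ⟨I, hI, reduceCoeff_eq_zero_iff.2 fun g => ?_⟩
  by_cases hg : g ∈ z.coeff.support
  · exact hsub (Finset.mem_coe.2 (Finset.mem_image_of_mem _ hg))
  · rw [Finsupp.notMem_support_iff.1 hg]; exact I.zero_mem

lemma UnitNilIdempotent.exists_of_chain {R G : Type*} [Ring R] [Group G]
    {c : Set (TwoSidedIdeal R)} (hc : IsChain (· ≤ ·) c) (hne : c.Nonempty) {J : TwoSidedIdeal R}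
    (hJ : ∀ r, r ∈ J ↔ ∃ I ∈ c, r ∈ I) {x : MonoidAlgebra R G}
    (hx : UnitNilIdempotent (reduceCoeff G J x)) :
    ∃ I ∈ c, UnitNilIdempotent (reduceCoeff G I x) := by
  obtain ⟨u, v, k, h1, h2, h3⟩ := (unitNilIdempotent_map_iff (reduceCoeff_surjective _)).1 hx
  have mono : ∀ {I I' : TwoSidedIdeal R} {z : MonoidAlgebra R G}, I ≤ I' →
      reduceCoeff G I z = 0 → reduceCoeff G I' z = 0 := fun hle hz =>
    reduceCoeff_eq_zero_iff.2 fun g => hle (reduceCoeff_eq_zero_iff.1 hz g)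
  obtain ⟨I₁, hI₁, h1⟩ := exists_reduceCoeff_eq_zero_of_chain hc hne hJ h1
  obtain ⟨I₂, hI₂, h2⟩ := exists_reduceCoeff_eq_zero_of_chain hc hne hJ h2
  obtain ⟨I₃, hI₃, h3⟩ := exists_reduceCoeff_eq_zero_of_chain hc hne hJ h3
  obtain ⟨I₄, hI₄, h14, h24⟩ := hc.directedOn I₁ hI₁ I₂ hI₂
  obtain ⟨I₅, hI₅, h45, h35⟩ := hc.directedOn I₄ hI₄ I₃ hI₃
  exact ⟨I₅, hI₅, (unitNilIdempotent_map_iff (reduceCoeff_surjective _)).2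
    ⟨u, v, k, mono (h14.trans h45) h1, mono (h24.trans h45) h2, mono h35 h3⟩⟩

/-! ### The group ring of a finite group -/

/-- An idempotent is central modulo an ideal containing the nilpotents, because `e * r * (1 - e)`
and `(1 - e) * r * e` have square zero. -/
lemma idempotent_commutator_mem {R : Type*} [Ring R] {I : TwoSidedIdeal R}
    (hI : ∀ r, IsNilpotent r → r ∈ I) {e : R} (hee : e * e = e) (r : R) :
    e * r - r * e ∈ I := by
  have h0 : (1 - e) * e = 0 := by rw [sub_mul, hee, one_mul, sub_self]
  have h0' : e * (1 - e) = 0 := by rw [mul_sub, hee, mul_one, sub_self]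
  have h1 : IsNilpotent (e * r * (1 - e)) := ⟨2, by
    calc (e * r * (1 - e)) ^ 2 = e * r * ((1 - e) * e) * r * (1 - e) := by noncomm_ring
      _ = 0 := by rw [h0]; simp⟩
  have h2 : IsNilpotent ((1 - e) * r * e) := ⟨2, by
    calc ((1 - e) * r * e) ^ 2 = (1 - e) * r * (e * (1 - e)) * r * e := by noncomm_ring
      _ = 0 := by rw [h0']; simp⟩
  have : e * r - r * e = e * r * (1 - e) - (1 - e) * r * e := by noncomm_ring
  rw [this]
  exact I.sub_mem (hI _ h1) (hI _ h2)

/-- A two-sided ideal containing the nilpotents and maximal among those modulo which the claim fails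
would have a division ring as quotient, where the claim holds. -/
lemma unitNilIdempotent_reduceCoeff {R G : Type*} [Ring R] [Group G] [Finite G]
    (hR : StronglyUnitNilClean R) {N : TwoSidedIdeal R} (hN : ∀ r, IsNilpotent r → r ∈ N)
    (x : MonoidAlgebra R G) : UnitNilIdempotent (reduceCoeff G N x) := by
  by_contra hfail
  obtain ⟨I, hNI, hI⟩ := zorn_le_nonempty₀
    {I : TwoSidedIdeal R | ¬ UnitNilIdempotent (reduceCoeff G I x)} (by
      intro c hcs hc y hy
      obtain ⟨J, hJ⟩ := exists_chain_union hc ⟨y, hy⟩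
      refine ⟨J, fun hx => ?_, fun I hI r hr => (hJ r).2 ⟨I, hI, hr⟩⟩
      obtain ⟨I, hI, h⟩ := UnitNilIdempotent.exists_of_chain hc ⟨y, hy⟩ hJ hx
      exact hcs hI h) N hfail
  have hmax : ∀ J : TwoSidedIdeal R, I ≤ J → ∀ r, r ∈ J → r ∉ I →
      UnitNilIdempotent (reduceCoeff G J x) := fun J hIJ r hr hrI => by
    by_contra hJ
    exact hrI (hI.2 hJ hIJ hr)
  have hnil : ∀ r, IsNilpotent r → r ∈ I := fun r hr => hNI (hN r hr)
  have hdiv : ∀ a : I.ringCon.Quotient, IsUnit a ∨ a = 0 := by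
    intro a
    obtain ⟨a, rfl⟩ := RingCon.mk'_surjective I.ringCon a
    obtain ⟨u, e, b, hee, hb, -, hux⟩ := hR a
    replace hee : e * e = e := hee
    have he := idempotent_commutator_mem hnil hee
    have hee' : (1 - e) * (1 - e) = 1 - e := IsIdempotentElem.one_sub hee
    have he' := idempotent_commutator_mem hnil hee'
    have hb0 : I.ringCon.mk' b = 0 := (mk'_eq_zero_iff I b).2 (hnil b hb)
    have hua : I.ringCon.mk' u * I.ringCon.mk' a = I.ringCon.mk' e := by
      rw [← map_mul, hux, map_add, hb0, add_zero]
    have hu : IsUnit (I.ringCon.mk' (u : R)) := u.isUnit.map I.ringCon.mk'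
    -- modulo `I`, `a` is zero if `e` is and a unit if `e` is one; any other `e` splits the problem
    -- between two strictly larger ideals
    by_cases heI : e ∈ I
    · right
      rw [(mk'_eq_zero_iff I e).2 heI] at hua
      exact hu.mul_right_eq_zero.1 hua
    by_cases heI' : 1 - e ∈ I
    · left
      have h1 : I.ringCon.mk' e = 1 := by
        have := (mk'_eq_zero_iff I _).2 heI'
        rw [map_sub, map_one, sub_eq_zero] at this
        exact this.symm
      rw [h1] at hua
      obtain ⟨w, hw⟩ := hu
      rw [← hw] at hua
      have ha : I.ringCon.mk' a = ↑w⁻¹ := by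
        rw [← Units.inv_mul_cancel_left w (I.ringCon.mk' a), hua, mul_one]
      rw [ha]
      exact Units.isUnit _
    · exact absurd (UnitNilIdempotent.of_colonIdeal hee he he'
        (hmax _ le_colonIdeal (1 - e)
          (mem_colonIdeal.2 (by rw [mul_sub, hee, mul_one, sub_self]; exact I.zero_mem)) heI')
        (hmax _ le_colonIdeal e
          (mem_colonIdeal.2 (by rw [sub_mul, hee, one_mul, sub_self]; exact I.zero_mem)) heI)) hI.1
  rcases subsingleton_or_nontrivial I.ringCon.Quotient with hs | hs
  · exact hI.1 ⟨1, 1, Subsingleton.elim _ _⟩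
  · let _ : DivisionRing I.ringCon.Quotient := DivisionRing.ofIsUnitOrEqZero hdiv
    exact hI.1 (UnitNilIdempotent.of_divisionRing (reduceCoeff G I x))

lemma unitNilIdempotent_of_finite {R G : Type*} [Ring R] [Group G] [Finite G]
    (h2p : Weakly2Primal R) (hR : StronglyUnitNilClean R) (x : MonoidAlgebra R G) :
    UnitNilIdempotent x := by
  obtain ⟨⟨N, hN⟩, hloc⟩ := h2p
  refine .of_map (reduceCoeff_surjective N) (fun z hz => ?_)
    (unitNilIdempotent_reduceCoeff hR (fun r hr => (hN r).2 hr) x)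
  exact MonoidAlgebra.isNilpotent_of_isNilpotent_coeff hloc z fun g =>
    (hN _).1 (reduceCoeff_eq_zero_iff.1 hz g)

/-! ### Locally finite groups -/

/-- Every element of `R[G]` comes from the group ring of the subgroup generated by its support. -/
lemma exists_mapDomainRingHom_eq {R G : Type*} [Ring R] [Group G] (x : MonoidAlgebra R G) :
    ∃ y : MonoidAlgebra R (Subgroup.closure (x.coeff.support : Set G)),
      MonoidAlgebra.mapDomainRingHom R
        (Subgroup.closure (x.coeff.support : Set G)).subtype y = x := by
  refine ⟨∑ g ∈ x.coeff.support.attach, MonoidAlgebra.single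
    ⟨g.1, Subgroup.subset_closure (Finset.mem_coe.2 g.2)⟩ (x.coeff g), ?_⟩
  rw [map_sum]
  simp only [MonoidAlgebra.mapDomainRingHom_apply, MonoidAlgebra.mapDomain_single,
    Subgroup.subtype_apply]
  rw [Finset.sum_attach x.coeff.support (fun g => MonoidAlgebra.single g (x.coeff g))]
  exact MonoidAlgebra.sum_coeff_single x

theorem monoidAlgebra_stronglyUnitNilClean_of_weakly2Primal
    (R : Type*) [Ring R] (h2p : Weakly2Primal R) (hR : StronglyUnitNilClean R)
    (G : Type*) [Group G] (hlf : LocallyFiniteGroup G) :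
    StronglyUnitNilClean (MonoidAlgebra R G) := by
  intro x
  obtain ⟨y, hy⟩ := exists_mapDomainRingHom_eq x
  have : Finite (Subgroup.closure (x.coeff.support : Set G)) :=
    (hlf _ ⟨x.coeff.support, rfl⟩).to_subtype
  exact (hy ▸ (unitNilIdempotent_of_finite h2p hR y).map _ : UnitNilIdempotent x).exists_unit
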